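/- Let k ≥ 3 and s ≥ 1 be integers, and let 𝒮 be the finite family of all sets of edges of the form F = E(S₁) ∪ E(S₂) ∪ E(S₃) ∪ E(S₄), where {S₁, S₂, S₃, S₄} is a sunflower of transversals of Fin k × Fin s. Then ∑_{F ∈ 𝒮} 2^{−|F|} ≤ C(k,3) · s^{4k − 9} · 2^{−4·C(k,2) + 9}. -/

import Mathlib

/-- A transversal of `Fin k × Fin s`: a finite set containing exactly one
vertex from each class `V_i = {i} × Fin s`. -/
def IsTransversal {k s : ℕ} (S : Finset (Fin k × Fin s)) : Prop :=
  ∀ i : Fin k, (S.filter (fun v => v.1 = i)).card = 1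

/-- The edge set of a transversal: all 2-element subsets of `S`. -/
def edgeSet {k s : ℕ} (S : Finset (Fin k × Fin s)) : Finset (Finset (Fin k × Fin s)) :=
  S.powersetCard 2

/-- `S₁,S₂,S₃,S₄` form a sunflower: they are pairwise distinct transversals and
there is a 3-element set `T` with `Sᵢ ∩ Sⱼ = T` for all `i ≠ j`. -/
def IsSunflower {k s : ℕ} (S₁ S₂ S₃ S₄ : Finset (Fin k × Fin s)) : Prop :=
  IsTransversal S₁ ∧ IsTransversal S₂ ∧ IsTransversal S₃ ∧ IsTransversal S₄ ∧
  S₁ ≠ S₂ ∧ S₁ ≠ S₃ ∧ S₁ ≠ S₄ ∧ S₂ ≠ S₃ ∧ S₂ ≠ S₄ ∧ S₃ ≠ S₄ ∧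
  ∃ T : Finset (Fin k × Fin s), T.card = 3 ∧
    S₁ ∩ S₂ = T ∧ S₁ ∩ S₃ = T ∧ S₁ ∩ S₄ = T ∧ S₂ ∩ S₃ = T ∧ S₂ ∩ S₄ = T ∧ S₃ ∩ S₄ = T

/-!
Every transversal has `C(k,2)` edges, and the edge sets of two petals meet exactly in the edges of
the kernel, so by inclusion–exclusion all unions `F` have the same size and the sum is just the
number of possible `F` times one weight. To count them, view transversals as functions
`Fin k → Fin s`: the petals of a sunflower are four functions that agree on the three classes which
the kernel meets, so there are at most `s ^ 3 * s ^ (4 * (k - 3))` choices for each of the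
`C(k,3)` sets of classes.
-/

section Finite

open Finset

variable {α ι κ β : Type*}

theorem powersetCard_inter [DecidableEq α] (n : ℕ) (A B : Finset α) :
    (A ∩ B).powersetCard n = A.powersetCard n ∩ B.powersetCard n := by
  ext e
  simp only [mem_inter, mem_powersetCard, subset_inter_iff]
  tauto

theorem card_biUnion_add_mul_of_pairwise_inter_eq [DecidableEq α] {I : Finset ι} (hI : I.Nonempty)
    {A : ι → Finset α} {K : Finset α} (hA : (I : Set ι).Pairwise fun i j => A i ∩ A j = K) :
    #(I.biUnion A) + #I * #K = ∑ i ∈ I, #(A i) + #K := by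
  classical
  induction hI using Finset.Nonempty.cons_induction with
  | singleton i => simp
  | cons i J hi hJ ih =>
    rw [coe_cons, Set.pairwise_insert_of_notMem (by exact_mod_cast hi)] at hA
    have hinter : A i ∩ J.biUnion A = K := by
      rw [inter_biUnion, biUnion_congr rfl fun j hj => (hA.2 j hj).1, ← sup_eq_biUnion,
        sup_const hJ]
    have hunion := card_union_add_card_inter (A i) (J.biUnion A)
    rw [hinter] at hunion
    rw [cons_eq_insert, biUnion_insert, sum_insert hi, card_insert_of_notMem hi]
    linarith [ih hA.1]

theorem ncard_setOf_forall_eqOn_le [Fintype ι] [Nonempty ι] [Fintype κ] [Fintype β] (A : Finset κ) :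
    {f : ι → κ → β | ∀ i j, Set.EqOn (f i) (f j) A}.ncard ≤
      Fintype.card β ^ (#A + Fintype.card ι * (Fintype.card κ - #A)) := by
  classical
  obtain ⟨i₀⟩ := ‹Nonempty ι›
  let restrict (f : ι → κ → β) : (A → β) × (ι × {a // a ∉ A} → β) :=
    (fun a => f i₀ a, fun p => f p.1 p.2)
  have hinj : Set.InjOn restrict {f | ∀ i j, Set.EqOn (f i) (f j) A} := by
    intro f hf g hg hfg
    obtain ⟨hin, hout⟩ := Prod.ext_iff.1 hfg
    ext i a
    by_cases ha : a ∈ A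
    · rw [hf i i₀ ha, hg i i₀ ha]
      exact congrFun hin ⟨a, ha⟩
    · exact congrFun hout (i, ⟨a, ha⟩)
  refine (Set.ncard_le_ncard_of_injOn (t := Set.univ) restrict (by simp) hinj).trans_eq ?_
  simp [Set.ncard_univ, Fintype.card_subtype_compl, pow_add]

end Finite

section Sunflowers

open Finset

variable {k s : ℕ} {ι : Type*}

theorem edgeSet_inter (S S' : Finset (Fin k × Fin s)) :
    edgeSet (S ∩ S') = edgeSet S ∩ edgeSet S' :=
  powersetCard_inter 2 S S'

theorem IsTransversal.card_eq {S : Finset (Fin k × Fin s)} (hS : IsTransversal S) : #S = k := by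
  rw [card_eq_sum_card_fiberwise (f := Prod.fst) (t := univ) (by simp)]
  simp [hS _]

theorem IsTransversal.exists_eq_graph {S : Finset (Fin k × Fin s)} (hS : IsTransversal S) :
    ∃ f : Fin k → Fin s, S = ({v | f v.1 = v.2} : Finset (Fin k × Fin s)) := by
  choose v hv using fun i => card_eq_one.1 (hS i)
  have hfst (i : Fin k) : (v i).1 = i := by
    have hvi : v i ∈ S.filter (fun w => w.1 = i) := by rw [hv i, mem_singleton]
    exact (mem_filter.1 hvi).2
  have hmem (w : Fin k × Fin s) : w ∈ S ↔ w = v w.1 := by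
    simpa using Finset.ext_iff.1 (hv w.1) w
  refine ⟨fun i => (v i).2, ?_⟩
  ext w
  simp [hmem, Prod.ext_iff, hfst, eq_comm]

/-- A sunflower of transversals with petals `S j` and kernel `T`, with any index type
in place of the four petals of `IsSunflower`. Distinctness of the petals is not required; two equal
petals must coincide with `T`. -/
structure IsSunflowerFamily (S : ι → Finset (Fin k × Fin s)) (T : Finset (Fin k × Fin s)) :
    Prop where
  isTransversal (j : ι) : IsTransversal (S j)
  inter_eq : Pairwise fun i j => S i ∩ S j = T

theorem IsSunflower.exists_isSunflowerFamily {S₁ S₂ S₃ S₄ : Finset (Fin k × Fin s)}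
    (h : IsSunflower S₁ S₂ S₃ S₄) :
    ∃ T, #T = 3 ∧ IsSunflowerFamily ![S₁, S₂, S₃, S₄] T := by
  obtain ⟨h₁, h₂, h₃, h₄, -, -, -, -, -, -, T, hT, h₁₂, h₁₃, h₁₄, h₂₃, h₂₄, h₃₄⟩ := h
  refine ⟨T, hT, ⟨?_, ?_⟩⟩
  · simp [Fin.forall_fin_succ, h₁, h₂, h₃, h₄]
  · have hlt (i j : Fin 4) (hij : i < j) :
        ![S₁, S₂, S₃, S₄] i ∩ ![S₁, S₂, S₃, S₄] j = T := by
      fin_cases i <;> fin_cases j <;> first | assumption | simp at hij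
    exact fun i j hij =>
      hij.lt_or_gt.elim (hlt i j) fun hji => (inter_comm _ _).trans (hlt j i hji)

namespace IsSunflowerFamily

variable {S : ι → Finset (Fin k × Fin s)} {T : Finset (Fin k × Fin s)}

theorem kernel_subset [Nontrivial ι] (h : IsSunflowerFamily S T) (j : ι) : T ⊆ S j := by
  obtain ⟨i, hij⟩ := exists_ne j
  exact h.inter_eq hij ▸ inter_subset_right

theorem card_biUnion_edgeSet [Fintype ι] [Nonempty ι] (h : IsSunflowerFamily S T) :
    #(univ.biUnion fun j => edgeSet (S j)) + Fintype.card ι * (#T).choose 2 =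
      Fintype.card ι * k.choose 2 + (#T).choose 2 := by
  have hinter : (↑(univ : Finset ι) : Set ι).Pairwise
      fun i j => edgeSet (S i) ∩ edgeSet (S j) = edgeSet T :=
    fun i _ j _ hij => (edgeSet_inter _ _).symm.trans (congrArg edgeSet (h.inter_eq hij))
  have hcard := card_biUnion_add_mul_of_pairwise_inter_eq univ_nonempty hinter
  simpa [edgeSet, (h.isTransversal _).card_eq] using hcard

theorem exists_eqOn_eq_graph [Nontrivial ι] (h : IsSunflowerFamily S T) :
    ∃ A : Finset (Fin k), #A = #T ∧ ∃ f : ι → Fin k → Fin s,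
      (∀ i j, Set.EqOn (f i) (f j) A) ∧
        S = fun j => ({v | f j v.1 = v.2} : Finset (Fin k × Fin s)) := by
  choose f hf using fun j => (h.isTransversal j).exists_eq_graph
  have hT (j : ι) (v) (hv : v ∈ T) : f j v.1 = v.2 := by
    simpa [hf j] using h.kernel_subset j hv
  obtain ⟨j⟩ : Nonempty ι := inferInstance
  refine ⟨T.image Prod.fst, card_image_of_injOn fun v hv w hw hvw => ?_, f, ?_, funext hf⟩
  · exact Prod.ext hvw (by rw [← hT j v hv, ← hT j w hw, hvw])
  · intro i j a ha
    obtain ⟨v, hv, rfl⟩ := mem_image.1 (mem_coe.1 ha)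
    rw [hT i v hv, hT j v hv]

end IsSunflowerFamily

theorem ncard_setOf_isSunflowerFamily_le [Fintype ι] [Nontrivial ι] (k s t : ℕ) :
    {S : ι → Finset (Fin k × Fin s) | ∃ T, #T = t ∧ IsSunflowerFamily S T}.ncard ≤
      k.choose t * s ^ (t + Fintype.card ι * (k - t)) := by
  let petals (f : ι → Fin k → Fin s) (j : ι) : Finset (Fin k × Fin s) := {v | f j v.1 = v.2}
  let agreeing (A : Finset (Fin k)) : Set (ι → Fin k → Fin s) := {f | ∀ i j, Set.EqOn (f i) (f j) A}
  have hcover : {S : ι → Finset (Fin k × Fin s) | ∃ T, #T = t ∧ IsSunflowerFamily S T} ⊆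
      ⋃ A ∈ powersetCard t univ, petals '' agreeing A := by
    rintro S ⟨T, rfl, h⟩
    obtain ⟨A, hA, f, hf, rfl⟩ := h.exists_eqOn_eq_graph
    exact Set.mem_biUnion (by simpa using hA) ⟨f, hf, rfl⟩
  have hbound (A) (hA : A ∈ powersetCard t (univ : Finset (Fin k))) :
      (petals '' agreeing A).ncard ≤ s ^ (t + Fintype.card ι * (k - t)) := by
    have hagree := ncard_setOf_forall_eqOn_le (ι := ι) (β := Fin s) A
    rw [(mem_powersetCard.1 hA).2, Fintype.card_fin, Fintype.card_fin] at hagree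
    exact (Set.ncard_image_le (Set.toFinite _)).trans hagree
  calc _ ≤ (⋃ A ∈ powersetCard t univ, petals '' agreeing A).ncard :=
        Set.ncard_le_ncard hcover (Set.toFinite _)
    _ ≤ ∑ A ∈ powersetCard t univ, (petals '' agreeing A).ncard := set_ncard_biUnion_le _ _
    _ ≤ ∑ _A ∈ powersetCard t (univ : Finset (Fin k)), s ^ (t + Fintype.card ι * (k - t)) :=
        sum_le_sum hbound
    _ = k.choose t * s ^ (t + Fintype.card ι * (k - t)) := by simp

theorem potential_of_sunflowers_general [Fintype ι] [Nontrivial ι] {t : ℕ}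
    {𝓕 : Set (Finset (Finset (Fin k × Fin s)))}
    (h𝓕 : ∀ F ∈ 𝓕, ∃ S : ι → Finset (Fin k × Fin s), (∃ T, #T = t ∧ IsSunflowerFamily S T) ∧
      univ.biUnion (fun j => edgeSet (S j)) = F) :
    ∑ᶠ F ∈ 𝓕, (2 : ℝ) ^ (-(#F : ℝ)) ≤
      (k.choose t : ℝ) * (s : ℝ) ^ (t + Fintype.card ι * (k - t)) *
        (2 : ℝ) ^ (-(Fintype.card ι * (k.choose 2 : ℝ)) +
          (Fintype.card ι - 1) * (t.choose 2 : ℝ)) := by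
  set w : ℝ := (2 : ℝ) ^ (-(Fintype.card ι * (k.choose 2 : ℝ)) +
    (Fintype.card ι - 1) * (t.choose 2 : ℝ)) with hw
  have hweight : ∀ F ∈ 𝓕, (2 : ℝ) ^ (-(#F : ℝ)) = w := by
    intro F hF
    obtain ⟨S, ⟨T, rfl, h⟩, rfl⟩ := h𝓕 F hF
    have hcard := congrArg (Nat.cast : ℕ → ℝ) h.card_biUnion_edgeSet
    push_cast at hcard
    rw [hw]
    congr 1
    linarith
  have hcount : 𝓕.ncard ≤ k.choose t * s ^ (t + Fintype.card ι * (k - t)) :=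
    calc 𝓕.ncard
      _ ≤ ((fun S : ι → Finset (Fin k × Fin s) => univ.biUnion fun j => edgeSet (S j)) ''
            {S | ∃ T, #T = t ∧ IsSunflowerFamily S T}).ncard :=
          Set.ncard_le_ncard h𝓕 (Set.toFinite _)
      _ ≤ {S : ι → Finset (Fin k × Fin s) | ∃ T, #T = t ∧ IsSunflowerFamily S T}.ncard :=
          Set.ncard_image_le (Set.toFinite _)
      _ ≤ _ := ncard_setOf_isSunflowerFamily_le k s t
  calc ∑ᶠ F ∈ 𝓕, (2 : ℝ) ^ (-(#F : ℝ))
    _ = 𝓕.ncard * w := by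
        rw [finsum_mem_congr rfl hweight, finsum_mem_eq_finite_toFinset_sum _ 𝓕.toFinite,
          sum_const, nsmul_eq_mul, Set.ncard_eq_toFinset_card 𝓕]
    _ ≤ _ := by
        gcongr
        exact_mod_cast hcount

end Sunflowers

/-- The sum of `2^{-|F|}` over all edge sets `F = E(S₁) ∪ E(S₂) ∪ E(S₃) ∪ E(S₄)`
of sunflowers is at most `C(k,3) · s^{4k-9} · 2^{-4·C(k,2)+9}`. -/
theorem potential_of_sunflowers (k s : ℕ) (hk : 3 ≤ k) (hs : 1 ≤ s) :
    ∑ᶠ F ∈ {F : Finset (Finset (Fin k × Fin s)) |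
        ∃ S₁ S₂ S₃ S₄, IsSunflower S₁ S₂ S₃ S₄ ∧
          F = edgeSet S₁ ∪ edgeSet S₂ ∪ edgeSet S₃ ∪ edgeSet S₄},
        (2 : ℝ) ^ (-(F.card : ℝ))
      ≤ (Nat.choose k 3 : ℝ) * (s : ℝ) ^ (4 * k - 9) *
        (2 : ℝ) ^ (-(4 * (Nat.choose k 2 : ℝ)) + 9) := by
  have hexp : 3 + Fintype.card (Fin 4) * (k - 3) = 4 * k - 9 := by
    rw [Fintype.card_fin]
    omega
  convert potential_of_sunflowers_general (ι := Fin 4) (t := 3) ?_ using 3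
  · rw [hexp]
  · norm_num [Nat.choose]
  · rintro F ⟨S₁, S₂, S₃, S₄, h, rfl⟩
    refine ⟨![S₁, S₂, S₃, S₄], h.exists_isSunflowerFamily, ?_⟩
    ext e
    simp [Fin.exists_fin_succ]
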